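/- Let A and B be connected graded k-algebras. There is an isomorphism of graded k-vector spaces A ⊔ B ≅ B ⊗_k T_k(A₊ ⊗_k B₊) ⊗_k A, where A₊ = ⊕_{i≥1} A_i and B₊ = ⊕_{i≥1} B_i are the augmentation ideals and T_k denotes the tensor algebra over k, all graded by total degree. -/

import Mathlib

/-!
Connected graded `k`-algebras are modelled as `k`-algebras `A` equipped with an internal
grading `𝒜 : ℕ → Submodule k A` (a `GradedRing`) with `𝒜 0` spanned by `1`.
The free product (coproduct) of `k`-algebras is `LinearAlgebra.FreeProduct`.
-/

open DirectSum TensorProduct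

noncomputable section

variable (k : Type) [Field k]

section FreeProductGrading

variable (A B : Type) [Ring A] [Ring B] [Algebra k A] [Algebra k B]

/-- The pair of algebras `A`, `B` as a `Bool`-indexed family. -/
def boolFam : Bool → Type := fun b => Bool.rec B A b

instance (b : Bool) : Ring (boolFam A B b) := by
  cases b <;> (dsimp [boolFam]; infer_instance)

instance (b : Bool) : Algebra k (boolFam A B b) := by
  cases b <;> (dsimp [boolFam]; infer_instance)

/-- The free product `A ⊔ B` (the coproduct of `A` and `B` in the category of
`k`-algebras). -/
abbrev FreeProd : Type := LinearAlgebra.FreeProduct k (boolFam A B)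

/-- The canonical embedding `A → A ⊔ B`. -/
def inlFP : A →ₐ[k] FreeProd k A B :=
  LinearAlgebra.FreeProduct.ι k (boolFam A B) true

/-- The canonical embedding `B → A ⊔ B`. -/
def inrFP : B →ₐ[k] FreeProd k A B :=
  LinearAlgebra.FreeProduct.ι k (boolFam A B) false

variable (𝒜 : ℕ → Submodule k A) (ℬ : ℕ → Submodule k B)

/-- A letter of a word in the free product: a homogeneous element of `A` or of `B`. -/
abbrev Letter : Type := (Σ i : ℕ, ↥(𝒜 i)) ⊕ (Σ i : ℕ, ↥(ℬ i))

/-- The degree of a letter. -/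
def letterDeg : Letter k A B 𝒜 ℬ → ℕ := Sum.elim (fun p => p.1) (fun p => p.1)

/-- The image of a letter in the free product `A ⊔ B`. -/
def letterEmb : Letter k A B 𝒜 ℬ → FreeProd k A B :=
  Sum.elim (fun p => inlFP k A B ↑p.2) (fun p => inrFP k A B ↑p.2)

/-- The degree-`n` piece of the free product `A ⊔ B`, graded by total degree: the span of
all products of homogeneous elements of `A` and `B` whose degrees sum to `n`. -/
def fpGrade (n : ℕ) : Submodule k (FreeProd k A B) :=
  Submodule.span k
    {x | ∃ l : List (Letter k A B 𝒜 ℬ),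
      (l.map (letterDeg k A B 𝒜 ℬ)).sum = n ∧ x = (l.map (letterEmb k A B 𝒜 ℬ)).prod}

/-- The augmentation ideal `A₊ = ⊕_{i≥1} A_i` of a connected graded algebra, as a
`k`-submodule. -/
def augSub : Submodule k A := ⨆ i : {i : ℕ // 0 < i}, 𝒜 i

/-- The degree-`d` piece of `A₊ ⊗_k B₊`, graded by total degree. -/
def pairGrade (d : ℕ) : Submodule k (↥(augSub k A 𝒜) ⊗[k] ↥(augSub k B ℬ)) :=
  Submodule.span k
    {x | ∃ (i j : ℕ) (a : ↥(augSub k A 𝒜)) (b : ↥(augSub k B ℬ)),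
      (a : A) ∈ 𝒜 i ∧ (b : B) ∈ ℬ j ∧ i + j = d ∧ x = a ⊗ₜ[k] b}

/-- The degree-`m` piece of the tensor algebra `T_k(A₊ ⊗_k B₊)`, graded by total degree. -/
def taGrade (m : ℕ) : Submodule k (TensorAlgebra k (↥(augSub k A 𝒜) ⊗[k] ↥(augSub k B ℬ))) :=
  Submodule.span k
    {x | ∃ l : List (Σ d : ℕ, ↥(pairGrade k A B 𝒜 ℬ d)),
      (l.map fun p => p.1).sum = m ∧
      x = (l.map fun p => TensorAlgebra.ι k (↑p.2 :
        ↥(augSub k A 𝒜) ⊗[k] ↥(augSub k B ℬ))).prod}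

/-- The degree-`n` piece of `B ⊗_k T_k(A₊ ⊗_k B₊) ⊗_k A`, graded by total degree. -/
def rhsGrade (n : ℕ) :
    Submodule k (B ⊗[k] ((TensorAlgebra k (↥(augSub k A 𝒜) ⊗[k] ↥(augSub k B ℬ))) ⊗[k] A)) :=
  Submodule.span k
    {x | ∃ (i j m : ℕ) (b : B) (t : TensorAlgebra k (↥(augSub k A 𝒜) ⊗[k] ↥(augSub k B ℬ)))
        (a : A), b ∈ ℬ j ∧ t ∈ taGrade k A B 𝒜 ℬ m ∧ a ∈ 𝒜 i ∧ j + m + i = n ∧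
      x = b ⊗ₜ[k] (t ⊗ₜ[k] a)}

end FreeProductGrading

section TensorAlgebraSplit

variable (V : Type) [AddCommMonoid V] [Module k V]

/-- The canonical map `k ⊕ V ⊗ T(V) → T(V)`. -/
def tensorAlgebraUnsplit : (k × V ⊗[k] TensorAlgebra k V) →ₗ[k] TensorAlgebra k V :=
  LinearMap.coprod (Algebra.linearMap k _)
    (TensorProduct.lift ((LinearMap.mul k (TensorAlgebra k V)).comp (TensorAlgebra.ι k)))

/-- The action of `V` on `k ⊕ V ⊗ T(V)` corresponding to left multiplication on `T(V)`. -/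
def splitAction : V →ₗ[k] Module.End k (k × V ⊗[k] TensorAlgebra k V) :=
  LinearMap.mk₂ k (fun v x => (0, v ⊗ₜ[k] tensorAlgebraUnsplit k V x))
    (by intros; simp [TensorProduct.add_tmul])
    (by intros; simp [TensorProduct.smul_tmul'])
    (by intros; simp [TensorProduct.tmul_add])
    (by intros; simp)

/-- The decomposition map `T(V) → k ⊕ V ⊗ T(V)`. -/
def tensorAlgebraSplitHom : TensorAlgebra k V →ₗ[k] (k × V ⊗[k] TensorAlgebra k V) :=
  (LinearMap.applyₗ ((1 : k), (0 : V ⊗[k] TensorAlgebra k V))).comp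
    (TensorAlgebra.lift k (splitAction k V)).toLinearMap

variable {k V}

theorem tensorAlgebraUnsplit_lift_splitAction (t : TensorAlgebra k V)
    (x : k × V ⊗[k] TensorAlgebra k V) :
    tensorAlgebraUnsplit k V (TensorAlgebra.lift k (splitAction k V) t x) =
      t * tensorAlgebraUnsplit k V x := by
  induction t using TensorAlgebra.induction generalizing x with
  | algebraMap r => simp [Module.algebraMap_end_apply, Algebra.smul_def]
  | ι v => simp [splitAction, tensorAlgebraUnsplit]
  | mul a b ha hb => simp [ha, hb, mul_assoc]
  | add a b ha hb => simp [ha, hb, add_mul]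

theorem tensorAlgebraUnsplit_splitHom (t : TensorAlgebra k V) :
    tensorAlgebraUnsplit k V (tensorAlgebraSplitHom k V t) = t := by
  have := tensorAlgebraUnsplit_lift_splitAction t ((1 : k), (0 : V ⊗[k] TensorAlgebra k V))
  simpa [tensorAlgebraSplitHom, tensorAlgebraUnsplit] using this

variable (k V)

/-- The decomposition `k ⊕ V ⊗ T(V) ≃ T(V)`. -/
def tensorAlgebraSplit : (k × V ⊗[k] TensorAlgebra k V) ≃ₗ[k] TensorAlgebra k V :=
  LinearEquiv.ofLinearMap (tensorAlgebraUnsplit k V) (tensorAlgebraSplitHom k V)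
    (by ext1 t; exact tensorAlgebraUnsplit_splitHom t)
    (by
      refine LinearMap.prod_ext ?_ (TensorProduct.ext' fun v t => ?_)
      · ext1
        simp [tensorAlgebraSplitHom, tensorAlgebraUnsplit]
      · have h := tensorAlgebraUnsplit_splitHom t
        simp only [tensorAlgebraSplitHom, LinearMap.comp_apply, AlgHom.toLinearMap_apply,
          LinearMap.applyₗ_apply_apply] at h
        have hι : tensorAlgebraUnsplit k V (0, v ⊗ₜ t) = TensorAlgebra.ι k v * t := by
          simp [tensorAlgebraUnsplit]
        simp only [LinearMap.comp_apply, LinearMap.inr_apply, hι, LinearMap.id_apply,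
          tensorAlgebraSplitHom, LinearMap.applyₗ_apply_apply, AlgHom.toLinearMap_apply, map_mul,
          TensorAlgebra.lift_ι_apply, Module.End.mul_apply]
        simp only [splitAction, LinearMap.mk₂_apply]
        simp only [splitAction] at h
        rw [h])

variable {k V}

theorem tensorAlgebraSplit_inl (c : k) : tensorAlgebraSplit k V (c, 0) = algebraMap k _ c := by
  simp [tensorAlgebraSplit, tensorAlgebraUnsplit]

theorem tensorAlgebraSplit_inr (v : V) (t : TensorAlgebra k V) :
    tensorAlgebraSplit k V (0, v ⊗ₜ t) = TensorAlgebra.ι k v * t := by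
  simp [tensorAlgebraSplit, tensorAlgebraUnsplit]

end TensorAlgebraSplit

section ProdLeft

variable {k} {M₁ M₂ M₃ : Type} [AddCommMonoid M₁] [AddCommMonoid M₂] [AddCommMonoid M₃]
  [Module k M₁] [Module k M₂] [Module k M₃]

theorem prodLeft_symm_inl (x : M₁) (y : M₃) :
    (TensorProduct.prodLeft k k M₁ M₂ M₃).symm (x ⊗ₜ y, 0) = (x, 0) ⊗ₜ y := by
  rw [LinearEquiv.symm_apply_eq]; simp

theorem prodLeft_symm_inr (x : M₂) (y : M₃) :
    (TensorProduct.prodLeft k k M₁ M₂ M₃).symm (0, x ⊗ₜ y) = (0, x) ⊗ₜ y := by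
  rw [LinearEquiv.symm_apply_eq]; simp

theorem prodAssoc_symm_mk (x : M₁) (y : M₂) (z : M₃) :
    (LinearEquiv.prodAssoc k M₁ M₂ M₃).symm (x, y, z) = ((x, y), z) :=
  rfl

end ProdLeft

section UnitSplit

variable {k} {A : Type} [Ring A] [Algebra k A] [Nontrivial A] {P : Submodule k A}

/-- A complement `P` of the line spanned by `1` gives a decomposition `k ⊕ P ≃ A`. -/
def unitSplit (hP : IsCompl (Submodule.span k {(1 : A)}) P) : (k × P) ≃ₗ[k] A :=
  ((LinearEquiv.toSpanNonzeroSingleton k A 1 one_ne_zero).prodCongr (LinearEquiv.refl k P)).trans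
    (Submodule.prodEquivOfIsCompl _ P hP)

theorem unitSplit_apply (hP : IsCompl (Submodule.span k {(1 : A)}) P) (c : k) (p : P) :
    unitSplit hP (c, p) = c • 1 + (p : A) := by
  simp [unitSplit]

theorem unitSplit_symm_one (hP : IsCompl (Submodule.span k {(1 : A)}) P) :
    (unitSplit hP).symm 1 = (1, 0) := by
  simp [LinearEquiv.symm_apply_eq, unitSplit_apply]

theorem unitSplit_symm_coe (hP : IsCompl (Submodule.span k {(1 : A)}) P) (p : P) :
    (unitSplit hP).symm (p : A) = (0, p) := by
  simp [LinearEquiv.symm_apply_eq, unitSplit_apply]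

end UnitSplit

section NormalForm

variable {k} {A B : Type} [Ring A] [Ring B] [Algebra k A] [Algebra k B]
  (P : Submodule k A) (Q : Submodule k B)

/-- The space `B ⊗ T(P ⊗ Q) ⊗ A` of normal forms of elements of the free product. -/
abbrev NormalForm : Type := B ⊗[k] (TensorAlgebra k (P ⊗[k] Q) ⊗[k] A)

/-- The summand `Q ⊗ T(P ⊗ Q) ⊗ A` of normal forms starting with a letter in `Q`. -/
abbrev NormalFormTail : Type := Q ⊗[k] (TensorAlgebra k (P ⊗[k] Q) ⊗[k] A)

/-- The decomposition of `T(P ⊗ Q) ⊗ A` by whether the tensor algebra factor has length zero. -/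
def tailSplit : (A × P ⊗[k] NormalFormTail P Q) ≃ₗ[k] TensorAlgebra k (P ⊗[k] Q) ⊗[k] A :=
  (((TensorProduct.lid k A).symm.prodCongr
    ((TensorProduct.assoc k P Q (TensorAlgebra k (P ⊗[k] Q) ⊗[k] A)).symm.trans
      (TensorProduct.assoc k (P ⊗[k] Q) (TensorAlgebra k (P ⊗[k] Q)) A).symm)).trans
    (TensorProduct.prodLeft k k k ((P ⊗[k] Q) ⊗[k] TensorAlgebra k (P ⊗[k] Q)) A).symm).trans
    (TensorProduct.congr (tensorAlgebraSplit k (P ⊗[k] Q)) (LinearEquiv.refl k A))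

variable {P Q}

theorem tailSplit_inl (a : A) : tailSplit P Q (a, 0) = 1 ⊗ₜ a := by
  simp [tailSplit, prodLeft_symm_inl, tensorAlgebraSplit_inl]

theorem tailSplit_inr (p : P) (q : Q) (t : TensorAlgebra k (P ⊗[k] Q)) (a : A) :
    tailSplit P Q (0, p ⊗ₜ (q ⊗ₜ (t ⊗ₜ a))) = (TensorAlgebra.ι k (p ⊗ₜ q) * t) ⊗ₜ a := by
  simp [tailSplit, prodLeft_symm_inr, tensorAlgebraSplit_inr]

variable (P Q) in
/-- The left action of `B` on normal forms. -/
def leftActB : B →ₐ[k] Module.End k (NormalForm P Q) :=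
  Algebra.lsmul k k (NormalForm P Q)

theorem leftActB_tmul (b b' : B) (x : TensorAlgebra k (P ⊗[k] Q) ⊗[k] A) :
    leftActB P Q b (b' ⊗ₜ x) = (b * b') ⊗ₜ x := by
  simp [leftActB, TensorProduct.smul_tmul']

variable [Nontrivial A] [Nontrivial B]
  (hP : IsCompl (Submodule.span k {(1 : A)}) P) (hQ : IsCompl (Submodule.span k {(1 : B)}) Q)

/-- The space of normal forms as the underlying space of a left `A`-module. -/
def normalFormSplit : (A × A ⊗[k] NormalFormTail P Q) ≃ₗ[k] NormalForm P Q :=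
  (((((LinearEquiv.refl k A).prodCongr
    ((((TensorProduct.congr (unitSplit hP).symm (LinearEquiv.refl k (NormalFormTail P Q))).trans
      (TensorProduct.prodLeft k k k P (NormalFormTail P Q))).trans
      ((TensorProduct.lid k (NormalFormTail P Q)).prodCongr
        (LinearEquiv.refl k (P ⊗[k] NormalFormTail P Q)))).trans
      (LinearEquiv.prodComm k _ _))).trans
    (LinearEquiv.prodAssoc k A (P ⊗[k] NormalFormTail P Q) (NormalFormTail P Q)).symm).trans
    (((tailSplit P Q).trans (TensorProduct.lid k _).symm).prodCongr
      (LinearEquiv.refl k (NormalFormTail P Q)))).trans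
    (TensorProduct.prodLeft k k k Q (TensorAlgebra k (P ⊗[k] Q) ⊗[k] A)).symm).trans
    (TensorProduct.congr (unitSplit hQ) (LinearEquiv.refl k _))

theorem normalFormSplit_inl (a : A) :
    normalFormSplit hP hQ (a, 0) = 1 ⊗ₜ (1 ⊗ₜ a) := by
  simp [normalFormSplit, prodAssoc_symm_mk, tailSplit_inl, prodLeft_symm_inl, unitSplit_apply]

theorem normalFormSplit_one_tmul (q : Q) (t : TensorAlgebra k (P ⊗[k] Q)) (a : A) :
    normalFormSplit hP hQ (0, 1 ⊗ₜ (q ⊗ₜ (t ⊗ₜ a))) = (q : B) ⊗ₜ (t ⊗ₜ a) := by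
  have h : tailSplit P Q (0, 0) = 0 := map_zero _
  simp [normalFormSplit, prodAssoc_symm_mk, unitSplit_symm_one, h, prodLeft_symm_inr, unitSplit_apply]

theorem normalFormSplit_coe_tmul (p : P) (q : Q) (t : TensorAlgebra k (P ⊗[k] Q)) (a : A) :
    normalFormSplit hP hQ (0, (p : A) ⊗ₜ (q ⊗ₜ (t ⊗ₜ a))) =
      1 ⊗ₜ ((TensorAlgebra.ι k (p ⊗ₜ q) * t) ⊗ₜ a) := by
  simp [normalFormSplit, prodAssoc_symm_mk, unitSplit_symm_coe, tailSplit_inr, prodLeft_symm_inl, unitSplit_apply]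

/-- The left action of `A` on normal forms. -/
def leftActA : A →ₐ[k] Module.End k (NormalForm P Q) :=
  ((normalFormSplit hP hQ).conjAlgEquiv k).toAlgHom.comp
    (Algebra.lsmul k k (A × A ⊗[k] NormalFormTail P Q))

theorem leftActA_normalFormSplit (a : A) (x : A × A ⊗[k] NormalFormTail P Q) :
    leftActA hP hQ a (normalFormSplit hP hQ x) = normalFormSplit hP hQ (a • x) := by
  simp [leftActA]

theorem leftActA_one_tmul (a a' : A) :
    leftActA hP hQ a (1 ⊗ₜ (1 ⊗ₜ a')) = 1 ⊗ₜ (1 ⊗ₜ (a * a')) := by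
  rw [← normalFormSplit_inl hP hQ, leftActA_normalFormSplit, ← normalFormSplit_inl hP hQ]
  simp

theorem leftActA_coe_tmul (p : P) (q : Q) (t : TensorAlgebra k (P ⊗[k] Q)) (a : A) :
    leftActA hP hQ p ((q : B) ⊗ₜ (t ⊗ₜ a)) =
      1 ⊗ₜ ((TensorAlgebra.ι k (p ⊗ₜ q) * t) ⊗ₜ a) := by
  rw [← normalFormSplit_one_tmul hP hQ, leftActA_normalFormSplit,
    ← normalFormSplit_coe_tmul hP hQ]
  simp [TensorProduct.smul_tmul']

end NormalForm

section Evaluation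

variable {k} {A B F : Type} [Ring A] [Ring B] [Semiring F] [Algebra k A] [Algebra k B]
  [Algebra k F] (P : Submodule k A) (Q : Submodule k B) (f : A →ₐ[k] F) (g : B →ₐ[k] F)

/-- The algebra map `T(P ⊗ Q) → F` induced by `p ⊗ q ↦ f p * g q`. -/
def evalTensor : TensorAlgebra k (P ⊗[k] Q) →ₐ[k] F :=
  TensorAlgebra.lift k (TensorProduct.lift
    ((LinearMap.mul k F).compl₁₂ (f.toLinearMap.comp P.subtype) (g.toLinearMap.comp Q.subtype)))

/-- The evaluation `b ⊗ t ⊗ a ↦ b * t * a` of normal forms in `F`. -/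
def evalNormalForm : NormalForm P Q →ₗ[k] F :=
  TensorProduct.lift ((LinearMap.mul k F).compl₁₂ g.toLinearMap
    (TensorProduct.lift ((LinearMap.mul k F).compl₁₂ (evalTensor P Q f g).toLinearMap
      f.toLinearMap)))

variable {P Q}

theorem evalTensor_ι (p : P) (q : Q) :
    evalTensor P Q f g (TensorAlgebra.ι k (p ⊗ₜ q)) = f p * g q := by
  simp [evalTensor]

theorem evalNormalForm_tmul (b : B) (t : TensorAlgebra k (P ⊗[k] Q)) (a : A) :
    evalNormalForm P Q f g (b ⊗ₜ (t ⊗ₜ a)) = g b * (evalTensor P Q f g t * f a) := by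
  simp [evalNormalForm]

theorem evalNormalForm_leftActB (b : B) (x : NormalForm P Q) :
    evalNormalForm P Q f g (leftActB P Q b x) = g b * evalNormalForm P Q f g x := by
  suffices h : (evalNormalForm P Q f g).comp (leftActB P Q b) =
      (LinearMap.mulLeft k (g b)).comp (evalNormalForm P Q f g) from LinearMap.congr_fun h x
  ext b' t a
  simp [leftActB_tmul, evalNormalForm_tmul, mul_assoc]

variable [Nontrivial A] [Nontrivial B]
  (hP : IsCompl (Submodule.span k {(1 : A)}) P) (hQ : IsCompl (Submodule.span k {(1 : B)}) Q)

theorem evalNormalForm_normalFormSplit_tmul (a : A) (n : NormalFormTail P Q) :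
    evalNormalForm P Q f g (normalFormSplit hP hQ (0, a ⊗ₜ n)) =
      f a * evalNormalForm P Q f g (normalFormSplit hP hQ (0, 1 ⊗ₜ n)) := by
  let ν : A ⊗[k] NormalFormTail P Q →ₗ[k] F := (evalNormalForm P Q f g).comp
    ((normalFormSplit hP hQ).toLinearMap.comp (LinearMap.inr k A _))
  suffices h : ν.comp (TensorProduct.mk k A _ a) =
      (LinearMap.mulLeft k (f a)).comp (ν.comp (TensorProduct.mk k A _ 1)) from
    LinearMap.congr_fun h n
  obtain ⟨⟨c, p⟩, rfl⟩ := (unitSplit hP).surjective a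
  ext q t a'
  have h₁ : ν (1 ⊗ₜ (q ⊗ₜ (t ⊗ₜ a'))) = g q * (evalTensor P Q f g t * f a') := by
    simp [ν, normalFormSplit_one_tmul, evalNormalForm_tmul]
  have h₂ : ν ((p : A) ⊗ₜ (q ⊗ₜ (t ⊗ₜ a'))) =
      f p * (g q * (evalTensor P Q f g t * f a')) := by
    simp [ν, normalFormSplit_coe_tmul, evalNormalForm_tmul, evalTensor_ι, mul_assoc]
  change ν (unitSplit hP (c, p) ⊗ₜ (q ⊗ₜ (t ⊗ₜ a'))) =
    f (unitSplit hP (c, p)) * ν (1 ⊗ₜ (q ⊗ₜ (t ⊗ₜ a')))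
  rw [unitSplit_apply, TensorProduct.add_tmul, map_add, ← TensorProduct.smul_tmul', map_smul, h₁,
    h₂]
  simp [add_mul]

theorem evalNormalForm_leftActA (a : A) (x : NormalForm P Q) :
    evalNormalForm P Q f g (leftActA hP hQ a x) = f a * evalNormalForm P Q f g x := by
  obtain ⟨m, rfl⟩ := (normalFormSplit hP hQ).surjective x
  rw [leftActA_normalFormSplit]
  let μ : A × A ⊗[k] NormalFormTail P Q →ₗ[k] F := (evalNormalForm P Q f g).comp
    (normalFormSplit hP hQ).toLinearMap
  suffices h : μ.comp (Algebra.lsmul k k (A × A ⊗[k] NormalFormTail P Q) a) =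
      (LinearMap.mulLeft k (f a)).comp μ from LinearMap.congr_fun h m
  refine LinearMap.prod_ext (LinearMap.ext fun a' => ?_) (TensorProduct.ext' fun a' n => ?_)
  · simp [μ, normalFormSplit_inl, evalNormalForm_tmul]
  · have h := evalNormalForm_normalFormSplit_tmul f g hP hQ (a * a') n
    rw [map_mul, mul_assoc, ← evalNormalForm_normalFormSplit_tmul] at h
    simpa [μ, TensorProduct.smul_tmul'] using h

variable {f g} (Ψ : F →ₐ[k] Module.End k (NormalForm P Q))

theorem action_evalTensor (hf : ∀ a, Ψ (f a) = leftActA hP hQ a)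
    (hg : ∀ b, Ψ (g b) = leftActB P Q b)
    (t s : TensorAlgebra k (P ⊗[k] Q)) (a : A) :
    Ψ (evalTensor P Q f g t) (1 ⊗ₜ (s ⊗ₜ a)) = 1 ⊗ₜ ((t * s) ⊗ₜ a) := by
  induction t using TensorAlgebra.induction generalizing s with
  | algebraMap r =>
    rw [AlgHom.commutes, AlgHom.commutes, Module.algebraMap_end_apply, ← Algebra.smul_def,
      ← TensorProduct.smul_tmul', TensorProduct.tmul_smul]
  | ι v =>
    induction v using TensorProduct.induction_on with
    | zero => simp
    | tmul p q =>
      rw [evalTensor_ι, map_mul, hf, hg, Module.End.mul_apply, leftActB_tmul, mul_one,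
        leftActA_coe_tmul]
    | add x y hx hy => simp [hx, hy, add_mul, TensorProduct.add_tmul, TensorProduct.tmul_add]
  | mul x y hx hy => simp [hx, hy, mul_assoc]
  | add x y hx hy => simp [hx, hy, add_mul, TensorProduct.add_tmul, TensorProduct.tmul_add]

theorem action_evalNormalForm (hf : ∀ a, Ψ (f a) = leftActA hP hQ a)
    (hg : ∀ b, Ψ (g b) = leftActB P Q b)
    (x : NormalForm P Q) :
    Ψ (evalNormalForm P Q f g x) (1 ⊗ₜ (1 ⊗ₜ 1)) = x := by
  suffices h : (LinearMap.applyₗ (1 ⊗ₜ (1 ⊗ₜ 1))).comp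
      (Ψ.toLinearMap.comp (evalNormalForm P Q f g)) = LinearMap.id from LinearMap.congr_fun h x
  ext b t a
  simp [evalNormalForm_tmul, hf, hg, leftActA_one_tmul, leftActB_tmul,
    action_evalTensor hP hQ Ψ hf hg]

theorem evalNormalForm_action (hf : ∀ a, Ψ (f a) = leftActA hP hQ a)
    (hg : ∀ b, Ψ (g b) = leftActB P Q b)
    (hgen : ∀ S : Subalgebra k F, (∀ a, f a ∈ S) → (∀ b, g b ∈ S) → S = ⊤)
    (y : F) (x : NormalForm P Q) :
    evalNormalForm P Q f g (Ψ y x) = y * evalNormalForm P Q f g x := by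
  let S : Subalgebra k F :=
    { carrier := {y | ∀ x, evalNormalForm P Q f g (Ψ y x) = y * evalNormalForm P Q f g x}
      mul_mem' := fun ha hb x => by simp [ha _, hb _, mul_assoc]
      add_mem' := fun ha hb x => by simp [ha _, hb _, add_mul]
      algebraMap_mem' := fun r x => by simp [Module.algebraMap_end_apply, Algebra.smul_def] }
  have hS : S = ⊤ := hgen S (fun a x => by rw [hf, evalNormalForm_leftActA])
    (fun b x => by rw [hg, evalNormalForm_leftActB])
  have hy : y ∈ S := hS ▸ Algebra.mem_top
  exact hy x

/-- The evaluation of normal forms is bijective when `F` is generated by `A` and `B` and the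
actions of `A` and `B` on normal forms extend to `F`. -/
def evalEquiv (hf : ∀ a, Ψ (f a) = leftActA hP hQ a)
    (hg : ∀ b, Ψ (g b) = leftActB P Q b)
    (hgen : ∀ S : Subalgebra k F, (∀ a, f a ∈ S) → (∀ b, g b ∈ S) → S = ⊤) :
    F ≃ₗ[k] NormalForm P Q :=
  LinearEquiv.ofLinearMap ((LinearMap.applyₗ (1 ⊗ₜ (1 ⊗ₜ 1))).comp Ψ.toLinearMap)
    (evalNormalForm P Q f g)
    (LinearMap.ext fun x => action_evalNormalForm hP hQ Ψ hf hg x)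
    (LinearMap.ext fun y => by
      simp [evalNormalForm_action hP hQ Ψ hf hg hgen, evalNormalForm_tmul])

end Evaluation

section FreeProdUniversal

variable {k} {A B : Type} [Ring A] [Ring B] [Algebra k A] [Algebra k B]

theorem exists_freeProd_lift {E : Type} [Semiring E] [Algebra k E] (f : A →ₐ[k] E)
    (g : B →ₐ[k] E) :
    ∃ Ψ : FreeProd k A B →ₐ[k] E,
      (∀ a, Ψ (inlFP k A B a) = f a) ∧ ∀ b, Ψ (inrFP k A B b) = g b := by
  let maps : ∀ b : Bool, boolFam A B b →ₐ[k] E := fun b =>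
    match b with
    | true => f
    | false => g
  refine ⟨LinearAlgebra.FreeProduct.lift k (boolFam A B) (fun {b} => maps b), fun a => ?_,
    fun b => ?_⟩
  · exact DFunLike.congr_fun
      (LinearAlgebra.FreeProduct.lift_comp_ι k (boolFam A B) (fun {b} => maps b) (i := true)) a
  · exact DFunLike.congr_fun
      (LinearAlgebra.FreeProduct.lift_comp_ι k (boolFam A B) (fun {b} => maps b) (i := false)) b

theorem freeProd_algHom_ext {E : Type} [Semiring E] [Algebra k E] {φ ψ : FreeProd k A B →ₐ[k] E}
    (hl : ∀ a, φ (inlFP k A B a) = ψ (inlFP k A B a))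
    (hr : ∀ b, φ (inrFP k A B b) = ψ (inrFP k A B b)) : φ = ψ := by
  refine (LinearAlgebra.FreeProduct.lift k (boolFam A B)).symm.injective ?_
  funext b
  cases b
  · exact AlgHom.ext hr
  · exact AlgHom.ext hl

theorem freeProd_subalgebra_eq_top (S : Subalgebra k (FreeProd k A B))
    (hl : ∀ a, inlFP k A B a ∈ S) (hr : ∀ b, inrFP k A B b ∈ S) : S = ⊤ := by
  obtain ⟨φ, hφl, hφr⟩ := exists_freeProd_lift ((inlFP k A B).codRestrict S hl)
    ((inrFP k A B).codRestrict S hr)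
  have h : S.val.comp φ = AlgHom.id k _ :=
    freeProd_algHom_ext (fun a => by simp [hφl]) (fun b => by simp [hφr])
  refine (Algebra.eq_top_iff).2 fun x => ?_
  rw [show x = φ x from (DFunLike.congr_fun h x).symm]
  exact (φ x).2

end FreeProdUniversal

section GradedPieces

variable {k} {A B : Type} [Ring A] [Ring B] [Algebra k A] [Algebra k B]
  {𝒜 : ℕ → Submodule k A} {ℬ : ℕ → Submodule k B}

theorem isCompl_augSub [GradedRing 𝒜] (h : 𝒜 0 = Submodule.span k {1}) :
    IsCompl (Submodule.span k {(1 : A)}) (augSub k A 𝒜) := by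
  have hint := DirectSum.Decomposition.isInternal 𝒜
  rw [← h]
  constructor
  · refine (hint.submodule_iSupIndep 0).mono_right (iSup_le fun i => ?_)
    exact le_iSup₂_of_le i.1 i.2.ne' le_rfl
  · rw [codisjoint_iff_le_sup, ← hint.submodule_iSup_eq_top]
    refine iSup_le fun i => ?_
    rcases Nat.eq_zero_or_pos i with rfl | hi
    · exact le_sup_left
    · exact le_sup_of_le_right (le_iSup (fun i : {i : ℕ // 0 < i} => 𝒜 i) ⟨i, hi⟩)

theorem mem_augSub {i : ℕ} (hi : 0 < i) {a : A} (ha : a ∈ 𝒜 i) : a ∈ augSub k A 𝒜 :=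
  Submodule.mem_iSup_of_mem (⟨i, hi⟩ : {i : ℕ // 0 < i}) ha

theorem one_mem_fpGrade : 1 ∈ fpGrade k A B 𝒜 ℬ 0 :=
  Submodule.subset_span ⟨[], by simp, by simp⟩

theorem mul_mem_fpGrade {m n : ℕ} {x y : FreeProd k A B} (hx : x ∈ fpGrade k A B 𝒜 ℬ m)
    (hy : y ∈ fpGrade k A B 𝒜 ℬ n) : x * y ∈ fpGrade k A B 𝒜 ℬ (m + n) := by
  have h := Submodule.mul_mem_mul hx hy
  rw [fpGrade, fpGrade, Submodule.span_mul_span] at h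
  refine Submodule.span_mono ?_ h
  rintro _ ⟨_, ⟨l, hl, rfl⟩, _, ⟨l', hl', rfl⟩, rfl⟩
  exact ⟨l ++ l', by simp [hl, hl'], by simp⟩

theorem inlFP_mem_fpGrade {i : ℕ} {a : A} (ha : a ∈ 𝒜 i) :
    inlFP k A B a ∈ fpGrade k A B 𝒜 ℬ i :=
  Submodule.subset_span ⟨[Sum.inl ⟨i, a, ha⟩], by simp [letterDeg], by simp [letterEmb]⟩

theorem inrFP_mem_fpGrade {j : ℕ} {b : B} (hb : b ∈ ℬ j) :
    inrFP k A B b ∈ fpGrade k A B 𝒜 ℬ j :=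
  Submodule.subset_span ⟨[Sum.inr ⟨j, b, hb⟩], by simp [letterDeg], by simp [letterEmb]⟩

theorem one_mem_taGrade : 1 ∈ taGrade k A B 𝒜 ℬ 0 :=
  Submodule.subset_span ⟨[], by simp, by simp⟩

theorem ι_mul_mem_taGrade {d m : ℕ} {v : augSub k A 𝒜 ⊗[k] augSub k B ℬ}
    {t : TensorAlgebra k (augSub k A 𝒜 ⊗[k] augSub k B ℬ)} (hv : v ∈ pairGrade k A B 𝒜 ℬ d)
    (ht : t ∈ taGrade k A B 𝒜 ℬ m) :
    TensorAlgebra.ι k v * t ∈ taGrade k A B 𝒜 ℬ (d + m) := by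
  induction ht using Submodule.span_induction with
  | mem x hx =>
    obtain ⟨l, hl, rfl⟩ := hx
    exact Submodule.subset_span ⟨⟨d, v, hv⟩ :: l, by simp [hl], by simp⟩
  | zero => simp
  | add x y _ _ hx hy => rw [mul_add]; exact add_mem hx hy
  | smul c x _ hx => rw [mul_smul_comm]; exact Submodule.smul_mem _ _ hx

theorem tmul_mem_pairGrade {i j : ℕ} {a : augSub k A 𝒜} {b : augSub k B ℬ} (ha : (a : A) ∈ 𝒜 i)
    (hb : (b : B) ∈ ℬ j) : a ⊗ₜ[k] b ∈ pairGrade k A B 𝒜 ℬ (i + j) :=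
  Submodule.subset_span ⟨i, j, a, b, ha, hb, rfl, rfl⟩

theorem tmul_mem_rhsGrade {i j m n : ℕ} {b : B}
    {t : TensorAlgebra k (augSub k A 𝒜 ⊗[k] augSub k B ℬ)} {a : A} (hb : b ∈ ℬ j)
    (ht : t ∈ taGrade k A B 𝒜 ℬ m) (ha : a ∈ 𝒜 i) (hn : j + m + i = n) :
    b ⊗ₜ (t ⊗ₜ a) ∈ rhsGrade k A B 𝒜 ℬ n :=
  Submodule.subset_span ⟨i, j, m, b, t, a, hb, ht, ha, hn, rfl⟩

theorem evalTensor_mem_fpGrade {m : ℕ} {t : TensorAlgebra k (augSub k A 𝒜 ⊗[k] augSub k B ℬ)}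
    (ht : t ∈ taGrade k A B 𝒜 ℬ m) :
    evalTensor _ _ (inlFP k A B) (inrFP k A B) t ∈ fpGrade k A B 𝒜 ℬ m := by
  induction ht using Submodule.span_induction with
  | zero => simp
  | add x y _ _ hx hy => rw [map_add]; exact add_mem hx hy
  | smul c x _ hx => rw [map_smul]; exact Submodule.smul_mem _ _ hx
  | mem x hx =>
  obtain ⟨l, rfl, rfl⟩ := hx
  induction l with
  | nil => simpa using one_mem_fpGrade
  | cons p l ih =>
    rw [List.map_cons, List.map_cons, List.prod_cons, List.sum_cons, map_mul]
    refine mul_mem_fpGrade ?_ ih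
    obtain ⟨d, v, hv⟩ := p
    dsimp only
    induction hv using Submodule.span_induction with
    | zero => simp
    | add x y _ _ hx hy => rw [map_add, map_add]; exact add_mem hx hy
    | smul c x _ hx => rw [map_smul, map_smul]; exact Submodule.smul_mem _ _ hx
    | mem x hx =>
      obtain ⟨i, j, a, b, ha, hb, rfl, rfl⟩ := hx
      rw [evalTensor_ι]
      exact mul_mem_fpGrade (inlFP_mem_fpGrade ha) (inrFP_mem_fpGrade hb)

theorem evalNormalForm_mem_fpGrade {n : ℕ} {x : NormalForm (augSub k A 𝒜) (augSub k B ℬ)}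
    (hx : x ∈ rhsGrade k A B 𝒜 ℬ n) :
    evalNormalForm _ _ (inlFP k A B) (inrFP k A B) x ∈ fpGrade k A B 𝒜 ℬ n := by
  induction hx using Submodule.span_induction with
  | zero => simp
  | add x y _ _ hx hy => rw [map_add]; exact add_mem hx hy
  | smul c x _ hx => rw [map_smul]; exact Submodule.smul_mem _ _ hx
  | mem x hx =>
    obtain ⟨i, j, m, b, t, a, hb, ht, ha, rfl, rfl⟩ := hx
    rw [evalNormalForm_tmul, add_assoc]
    exact mul_mem_fpGrade (inrFP_mem_fpGrade hb)
      (mul_mem_fpGrade (evalTensor_mem_fpGrade ht) (inlFP_mem_fpGrade ha))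

theorem leftActB_mem_rhsGrade [GradedRing ℬ] {j n : ℕ} {b : B} (hb : b ∈ ℬ j)
    {x : NormalForm (augSub k A 𝒜) (augSub k B ℬ)} (hx : x ∈ rhsGrade k A B 𝒜 ℬ n) :
    leftActB _ _ b x ∈ rhsGrade k A B 𝒜 ℬ (j + n) := by
  induction hx using Submodule.span_induction with
  | zero => simp
  | add x y _ _ hx hy => rw [map_add]; exact add_mem hx hy
  | smul c x _ hx => rw [map_smul]; exact Submodule.smul_mem _ _ hx
  | mem x hx =>
    obtain ⟨i, j', m, b', t, a, hb', ht, ha, rfl, rfl⟩ := hx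
    rw [leftActB_tmul]
    exact tmul_mem_rhsGrade (SetLike.GradedMul.mul_mem hb hb') ht ha (by omega)

variable [Nontrivial A] [Nontrivial B] [GradedRing ℬ]
  (hP : IsCompl (Submodule.span k {(1 : A)}) (augSub k A 𝒜))
  (hQ : IsCompl (Submodule.span k {(1 : B)}) (augSub k B ℬ))

theorem leftActA_tmul_mem_rhsGrade {i i' j m : ℕ} {a a' : A} {b : augSub k B ℬ}
    {t : TensorAlgebra k (augSub k A 𝒜 ⊗[k] augSub k B ℬ)} (hi : 0 < i) (ha : a ∈ 𝒜 i)
    (hb : (b : B) ∈ ℬ j) (ht : t ∈ taGrade k A B 𝒜 ℬ m) (ha' : a' ∈ 𝒜 i') :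
    leftActA hP hQ a ((b : B) ⊗ₜ (t ⊗ₜ a')) ∈ rhsGrade k A B 𝒜 ℬ (i + (j + m + i')) := by
  have h := leftActA_coe_tmul hP hQ ⟨a, mem_augSub hi ha⟩ b t a'
  dsimp only at h
  rw [h]
  refine tmul_mem_rhsGrade SetLike.GradedOne.one_mem
    (ι_mul_mem_taGrade (tmul_mem_pairGrade (i := i) ha hb) ht) ha' (by omega)

variable [GradedRing 𝒜]

theorem leftActA_one_tmul_mem_rhsGrade {i i' m : ℕ} {a a' : A}
    {t : TensorAlgebra k (augSub k A 𝒜 ⊗[k] augSub k B ℬ)} (hi : 0 < i) (ha : a ∈ 𝒜 i)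
    (ht : t ∈ taGrade k A B 𝒜 ℬ m) (ha' : a' ∈ 𝒜 i') :
    leftActA hP hQ a (1 ⊗ₜ (t ⊗ₜ a')) ∈ rhsGrade k A B 𝒜 ℬ (i + (m + i')) := by
  induction ht using Submodule.span_induction with
  | zero => simp
  | add x y _ _ hx hy =>
    rw [TensorProduct.add_tmul, TensorProduct.tmul_add, map_add]
    exact add_mem hx hy
  | smul c x _ hx =>
    rw [← TensorProduct.smul_tmul', TensorProduct.tmul_smul, map_smul]
    exact Submodule.smul_mem _ _ hx
  | mem x hx =>
  obtain ⟨l, rfl, rfl⟩ := hx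
  cases l with
  | nil =>
    simp only [List.map_nil, List.prod_nil, List.sum_nil, leftActA_one_tmul]
    exact tmul_mem_rhsGrade SetLike.GradedOne.one_mem one_mem_taGrade
      (SetLike.GradedMul.mul_mem ha ha') (by omega)
  | cons p l =>
    rw [List.map_cons, List.map_cons, List.prod_cons, List.sum_cons]
    obtain ⟨d, v, hv⟩ := p
    dsimp only
    induction hv using Submodule.span_induction with
    | zero => simp
    | add x y _ _ hx hy =>
      rw [map_add, add_mul, TensorProduct.add_tmul, TensorProduct.tmul_add, map_add]
      exact add_mem hx hy
    | smul c x _ hx =>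
      rw [map_smul, smul_mul_assoc, ← TensorProduct.smul_tmul', TensorProduct.tmul_smul, map_smul]
      exact Submodule.smul_mem _ _ hx
    | mem x hx =>
      obtain ⟨i₁, j, a₁, b, ha₁, hb, rfl, rfl⟩ := hx
      rw [← leftActA_coe_tmul hP hQ, ← Module.End.mul_apply, ← map_mul]
      have h := leftActA_tmul_mem_rhsGrade hP hQ (i := i + i₁) (by omega)
        (SetLike.GradedMul.mul_mem ha ha₁) hb (Submodule.subset_span ⟨l, rfl, rfl⟩) ha'
      convert h using 1
      congr 1
      omega

theorem leftActA_mem_rhsGrade (hconnA : 𝒜 0 = Submodule.span k {1})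
    (hconnB : ℬ 0 = Submodule.span k {1}) {i n : ℕ} {a : A} (ha : a ∈ 𝒜 i)
    {x : NormalForm (augSub k A 𝒜) (augSub k B ℬ)} (hx : x ∈ rhsGrade k A B 𝒜 ℬ n) :
    leftActA hP hQ a x ∈ rhsGrade k A B 𝒜 ℬ (i + n) := by
  rcases Nat.eq_zero_or_pos i with rfl | hi
  · rw [hconnA, Submodule.mem_span_singleton] at ha
    obtain ⟨c, rfl⟩ := ha
    rw [map_smul, map_one, zero_add]
    exact Submodule.smul_mem _ c hx
  induction hx using Submodule.span_induction with
  | zero => simp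
  | add x y _ _ hx hy => rw [map_add]; exact add_mem hx hy
  | smul c x _ hx => rw [map_smul]; exact Submodule.smul_mem _ _ hx
  | mem x hx =>
    obtain ⟨i', j, m, b, t, a', hb, ht, ha', rfl, rfl⟩ := hx
    rcases Nat.eq_zero_or_pos j with rfl | hj
    · rw [hconnB, Submodule.mem_span_singleton] at hb
      obtain ⟨c, rfl⟩ := hb
      rw [← TensorProduct.smul_tmul', map_smul, zero_add]
      exact Submodule.smul_mem _ c (leftActA_one_tmul_mem_rhsGrade hP hQ hi ha ht ha')
    · exact leftActA_tmul_mem_rhsGrade hP hQ (b := ⟨b, mem_augSub hj hb⟩) hi ha hb ht ha'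

theorem action_mem_rhsGrade (hconnA : 𝒜 0 = Submodule.span k {1})
    (hconnB : ℬ 0 = Submodule.span k {1})
    {Ψ : FreeProd k A B →ₐ[k] Module.End k (NormalForm (augSub k A 𝒜) (augSub k B ℬ))}
    (hl : ∀ a, Ψ (inlFP k A B a) = leftActA hP hQ a)
    (hr : ∀ b, Ψ (inrFP k A B b) = leftActB _ _ b)
    {n : ℕ} {y : FreeProd k A B} (hy : y ∈ fpGrade k A B 𝒜 ℬ n) :
    Ψ y (1 ⊗ₜ (1 ⊗ₜ 1)) ∈ rhsGrade k A B 𝒜 ℬ n := by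
  induction hy using Submodule.span_induction with
  | zero => simp
  | add x y _ _ hx hy => rw [map_add]; exact add_mem hx hy
  | smul c x _ hx => rw [map_smul]; exact Submodule.smul_mem _ _ hx
  | mem x hx =>
  obtain ⟨l, rfl, rfl⟩ := hx
  induction l with
  | nil =>
    simpa using tmul_mem_rhsGrade (SetLike.GradedOne.one_mem (A := ℬ)) one_mem_taGrade
      (SetLike.GradedOne.one_mem (A := 𝒜)) rfl
  | cons p l ih =>
    rw [List.map_cons, List.map_cons, List.prod_cons, List.sum_cons, map_mul,
      Module.End.mul_apply]
    rcases p with ⟨i, a, ha⟩ | ⟨j, b, hb⟩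
    · have h := leftActA_mem_rhsGrade hP hQ hconnA hconnB ha ih
      rw [← hl] at h
      exact h
    · have h := leftActB_mem_rhsGrade hb ih
      rw [← hr] at h
      exact h

end GradedPieces

/-- **(Proof of Lemma 1.7 in Moore, "Cohomology over fiber products of local rings")**.
For connected graded `k`-algebras `A` and `B` there is an isomorphism of graded
`k`-vector spaces `A ⊔ B ≅ B ⊗_k T_k(A₊ ⊗_k B₊) ⊗_k A`, where `A ⊔ B` is the free
product (coproduct of connected graded `k`-algebras), `T_k` denotes the tensor algebra,
and everything is graded by total degree. -/
theorem freeProduct_tensor_decomposition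
    (A B : Type) [Ring A] [Ring B] [Algebra k A] [Algebra k B]
    (𝒜 : ℕ → Submodule k A) (ℬ : ℕ → Submodule k B)
    [GradedRing 𝒜] [GradedRing ℬ]
    (hconnA : 𝒜 0 = Submodule.span k {1}) (hconnB : ℬ 0 = Submodule.span k {1}) :
    ∃ e : FreeProd k A B ≃ₗ[k]
        (B ⊗[k] ((TensorAlgebra k (↥(augSub k A 𝒜) ⊗[k] ↥(augSub k B ℬ))) ⊗[k] A)),
      ∀ n : ℕ, Submodule.map (e : FreeProd k A B →ₗ[k] _) (fpGrade k A B 𝒜 ℬ n) =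
        rhsGrade k A B 𝒜 ℬ n := by
  by_cases hA : Nontrivial A
  · by_cases hB : Nontrivial B
    · have hP := isCompl_augSub hconnA
      have hQ := isCompl_augSub hconnB
      obtain ⟨Ψ, hl, hr⟩ := exists_freeProd_lift (leftActA hP hQ) (leftActB _ _)
      let e := evalEquiv hP hQ Ψ hl hr freeProd_subalgebra_eq_top
      refine ⟨e, fun n => le_antisymm ?_ fun x hx => ?_⟩
      · rintro _ ⟨y, hy, rfl⟩
        exact action_mem_rhsGrade hP hQ hconnA hconnB hl hr hy
      · exact ⟨e.symm x, evalNormalForm_mem_fpGrade hx, e.apply_symm_apply x⟩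
    · rw [not_nontrivial_iff_subsingleton] at hB
      have h : (1 : FreeProd k A B) = 0 := by
        rw [← map_one (inrFP k A B), Subsingleton.elim (1 : B) 0, map_zero]
      have := subsingleton_of_zero_eq_one h.symm
      exact ⟨LinearEquiv.ofSubsingleton _ _, fun n => Subsingleton.elim _ _⟩
  · rw [not_nontrivial_iff_subsingleton] at hA
    have h : (1 : FreeProd k A B) = 0 := by
      rw [← map_one (inlFP k A B), Subsingleton.elim (1 : A) 0, map_zero]
    have := subsingleton_of_zero_eq_one h.symm
    exact ⟨LinearEquiv.ofSubsingleton _ _, fun n => Subsingleton.elim _ _⟩
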